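/- Let ω > 0, g ∈ ℝ, t ∈ ℝ and s > 0. Let X₁ and X₂ be independent real Gaussian random variables on a probability space, each with mean 0 and variance s, and set φ = 4√2·(g/ω)·sin(ωt/2)·(sin(ωt)·X₁ + cos(ωt)·X₂). Then E[e^{iφ}] = exp(−16·(g²/ω²)·s·sin²(ωt/2)). In particular its modulus equals the quantum interference visibility exp(−16·(g²/ω²)·(ñ + 1/2)·sin²(ωt/2)) when s = ñ + 1/2. -/

import Mathlib

open Real MeasureTheory ProbabilityTheory

/-!
Independent Gaussians with a common variance `v` form an isotropic pair, so their combination with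
coefficients `(sin ωt, cos ωt)` on the unit circle again has variance `v`. The phase is thus a
single Gaussian variable scaled by an amplitude whose square is `32 (g/ω)² sin²(ωt/2)`, and its
visibility is a value of the Gaussian characteristic function.
-/

theorem hasLaw_of_map_eq {Ω E : Type*} [MeasurableSpace Ω] [MeasurableSpace E]
    {μ : Measure Ω} {ν : Measure E} [NeZero ν] {X : Ω → E} (hX : μ.map X = ν) :
    HasLaw X ν μ where
  aemeasurable := aemeasurable_of_map_neZero (hX ▸ inferInstance)
  map_eq := hX

section Gaussian

variable {Ω : Type*} [MeasurableSpace Ω] {μ : Measure Ω} {X Y : Ω → ℝ} {m₁ m₂ : ℝ}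

theorem hasLaw_gaussianReal_const_mul_add_const_mul {v₁ v₂ : NNReal} (hXY : IndepFun X Y μ)
    (hX : HasLaw X (gaussianReal m₁ v₁) μ) (hY : HasLaw Y (gaussianReal m₂ v₂) μ) (a b : ℝ) :
    HasLaw (fun ω ↦ a * X ω + b * Y ω)
      (gaussianReal (a * m₁ + b * m₂)
        (.mk (a ^ 2) (sq_nonneg a) * v₁ + .mk (b ^ 2) (sq_nonneg b) * v₂)) μ := by
  have hindep : IndepFun (fun ω ↦ a * X ω) (fun ω ↦ b * Y ω) μ :=
    hXY.comp (measurable_const_mul a) (measurable_const_mul b)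
  exact hasLaw_of_map_eq <| gaussianReal_add_gaussianReal_of_indepFun hindep
    (gaussianReal_const_mul hX a).map_eq (gaussianReal_const_mul hY b).map_eq

theorem hasLaw_gaussianReal_of_sq_add_sq_eq_one {v : NNReal} (hXY : IndepFun X Y μ)
    (hX : HasLaw X (gaussianReal m₁ v) μ) (hY : HasLaw Y (gaussianReal m₂ v) μ)
    {a b : ℝ} (hab : a ^ 2 + b ^ 2 = 1) :
    HasLaw (fun ω ↦ a * X ω + b * Y ω) (gaussianReal (a * m₁ + b * m₂) v) μ := by
  have hv : .mk (a ^ 2) (sq_nonneg a) * v + .mk (b ^ 2) (sq_nonneg b) * v = v := by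
    ext
    simp only [NNReal.coe_add, NNReal.coe_mul, NNReal.coe_mk, ← add_mul, hab, one_mul]
  simpa only [hv] using hasLaw_gaussianReal_const_mul_add_const_mul hXY hX hY a b

theorem integral_cexp_I_mul_const_mul_of_hasLaw_gaussianReal {m : ℝ} {v : NNReal}
    (hX : HasLaw X (gaussianReal m v) μ) (c : ℝ) :
    ∫ ω, Complex.exp (Complex.I * ((c * X ω : ℝ) : ℂ)) ∂μ
      = Complex.exp (c * m * Complex.I - v * c ^ 2 / 2) := by
  calc ∫ ω, Complex.exp (Complex.I * ((c * X ω : ℝ) : ℂ)) ∂μ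
    _ = complexMGF X μ (Complex.I * c) := by
      simp only [complexMGF, Complex.ofReal_mul, mul_assoc]
    _ = Complex.exp (Complex.I * c * m + v * (Complex.I * c) ^ 2 / 2) :=
      complexMGF_gaussianReal hX.map_eq _
    _ = Complex.exp (c * m * Complex.I - v * c ^ 2 / 2) := by
      rw [mul_pow, Complex.I_sq]
      ring_nf

end Gaussian

/-- Semi-classical model 3: for two independent Gaussian random variables `X₁, X₂`
with mean 0 and variance `s`, the characteristic-function average of the phase
`φ = 4√2 (g/ω) sin(ωt/2)(sin(ωt) X₁ + cos(ωt) X₂)` equals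
`exp(−16 (g²/ω²) s sin²(ωt/2))`, the quantum interference visibility at `s = ñ + 1/2`. -/
theorem expectation_phase_model3 (ω g t s : ℝ) (hω : 0 < ω) (hs : 0 < s)
    {Ω : Type*} [MeasurableSpace Ω] (μ : Measure Ω) [IsProbabilityMeasure μ]
    (X₁ X₂ : Ω → ℝ)
    (h₁ : μ.map X₁ = gaussianReal 0 ⟨s, hs.le⟩)
    (h₂ : μ.map X₂ = gaussianReal 0 ⟨s, hs.le⟩)
    (hindep : IndepFun X₁ X₂ μ) :
    (∫ a, Complex.exp (Complex.I *
        ((4 * Real.sqrt 2 * (g / ω) * Real.sin (ω * t / 2) *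
          (Real.sin (ω * t) * X₁ a + Real.cos (ω * t) * X₂ a) : ℝ) : ℂ)) ∂μ)
      = ((Real.exp (-16 * (g ^ 2 / ω ^ 2) * s * Real.sin (ω * t / 2) ^ 2) : ℝ) : ℂ) := by
  set c : ℝ := 4 * √2 * (g / ω) * sin (ω * t / 2)
  have hX₁ : HasLaw X₁ (gaussianReal 0 (.mk s hs.le)) μ := hasLaw_of_map_eq h₁
  have hX₂ : HasLaw X₂ (gaussianReal 0 (.mk s hs.le)) μ := hasLaw_of_map_eq h₂
  have hrot : HasLaw (fun a ↦ sin (ω * t) * X₁ a + cos (ω * t) * X₂ a)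
      (gaussianReal 0 (.mk s hs.le)) μ := by
    simpa only [mul_zero, add_zero] using
      hasLaw_gaussianReal_of_sq_add_sq_eq_one hindep hX₁ hX₂ (sin_sq_add_cos_sq (ω * t))
  have hc : c ^ 2 = 32 * (g ^ 2 / ω ^ 2) * sin (ω * t / 2) ^ 2 := by
    simp only [c, mul_pow, div_pow, sq_sqrt zero_le_two]
    ring
  have hexponent : -(s * c ^ 2 / 2) = -16 * (g ^ 2 / ω ^ 2) * s * sin (ω * t / 2) ^ 2 := by
    rw [hc]
    ring
  rw [integral_cexp_I_mul_const_mul_of_hasLaw_gaussianReal hrot, ← hexponent]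
  simp
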